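/- arXiv:2105.15069 — 7 statements merged into one kernel-verified Lean document; each statement's English description precedes it below -/
import Mathlib

section
/- Suppose Y has more than two elements, L is symmetric (L y y' = L y' y for all y, y'), and the Max-Margin loss S_M is consistent to L, i.e., Fisher consistent to L under some decoding. Then L satisfies the triangle inequality L y y'' ≤ L y y' + L y' y'' for all y, y', y'' (so L is a distance), and for every y1, y2, y3 ∈ Y there exists z ∈ Y such that L y1 y2 = L y1 z + L z y2, L y1 y3 = L y1 z + L z y3, and L y2 y3 = L y2 z + L z y3. -/
open Finset Set

variable {Y : Type*} [Fintype Y] [DecidableEq Y] [Nonempty Y]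

/-- Probability simplex over `Y`. -/
def simplexSet (Y : Type*) [Fintype Y] : Set (Y → ℝ) :=
  {q | (∀ y, 0 ≤ q y) ∧ ∑ y, q y = 1}

/-- Bayes risk of the discrete loss `L`. -/
noncomputable def HL (L : Y → Y → ℝ) (q : Y → ℝ) : ℝ :=
  ⨅ y : Y, ∑ y', L y y' * q y'

/-- Optimal-label set. -/
noncomputable def ystar (L : Y → Y → ℝ) (q : Y → ℝ) : Set Y :=
  {y | ∑ y', L y y' * q y' = HL L q}

/-- Prediction set of label `y`. -/
noncomputable def predSet (L : Y → Y → ℝ) (y : Y) : Set (Y → ℝ) :=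
  {q ∈ simplexSet Y | y ∈ ystar L q}

/-- Max-Margin loss. -/
noncomputable def SM (L : Y → Y → ℝ) (v : Y → ℝ) (y : Y) : ℝ :=
  ⨆ y' : Y, (L y y' + v y' - v y)

/-- Bayes risk of the Max-Margin loss. -/
noncomputable def HM (L : Y → Y → ℝ) (q : Y → ℝ) : ℝ :=
  ⨅ v : Y → ℝ, ∑ y, q y * SM L v y

/-- Conditional-risk minimizers of the Max-Margin loss. -/
noncomputable def vstarM (L : Y → Y → ℝ) (q : Y → ℝ) : Set (Y → ℝ) :=
  {v | ∑ y, q y * SM L v y = HM L q}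

/-- Restricted-Max-Margin loss. -/
noncomputable def SRM (L : Y → Y → ℝ) (v : Y → ℝ) (y : Y) : ℝ :=
  sSup ((fun q => ∑ y', L y y' * q y' + ∑ z, v z * q z) '' predSet L y) - v y

/-- Bayes risk of the Restricted-Max-Margin loss. -/
noncomputable def HRM (L : Y → Y → ℝ) (q : Y → ℝ) : ℝ :=
  ⨅ v : Y → ℝ, ∑ y, q y * SRM L v y

/-- Conditional-risk minimizers of the Restricted-Max-Margin loss. -/
noncomputable def vstarRM (L : Y → Y → ℝ) (q : Y → ℝ) : Set (Y → ℝ) :=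
  {v | ∑ y, q y * SRM L v y = HRM L q}

/-- Max-Min-Margin loss. -/
noncomputable def SMM (L : Y → Y → ℝ) (v : Y → ℝ) (y : Y) : ℝ :=
  sSup ((fun q => (⨅ z : Y, ∑ y', L z y' * q y') + ∑ z, v z * q z) '' simplexSet Y) - v y

/-- Bayes risk of the Max-Min-Margin loss. -/
noncomputable def HMM (L : Y → Y → ℝ) (q : Y → ℝ) : ℝ :=
  ⨅ v : Y → ℝ, ∑ y, q y * SMM L v y

/-- Transportation polytope `U(q, q)`. -/
def Upoly (q : Y → ℝ) : Set (Y → Y → ℝ) :=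
  {Q | (∀ y y', 0 ≤ Q y y') ∧ (∀ y, ∑ y', Q y y' = q y) ∧ (∀ y', ∑ y, Q y y' = q y')}

/-- The constraint set `C_L`. -/
def CL (L : Y → Y → ℝ) : Set (Y → Y → ℝ) :=
  {Q | ∀ y z : Y, ∑ y', L y y' * Q y y' ≤ ∑ y', L z y' * Q y y'}

/-- The distribution putting mass `1/2` on each of `i` and `j`. -/
noncomputable def pairDist (i j : Y) (y : Y) : ℝ :=
  (if y = i then 1 / 2 else 0) + (if y = j then 1 / 2 else 0)

theorem pairDist_mem_simplexSet (i j : Y) : pairDist i j ∈ simplexSet Y := by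
  refine ⟨fun y => ?_, ?_⟩
  · unfold pairDist
    positivity
  · simp only [pairDist, Finset.sum_add_distrib, Finset.sum_ite_eq', Finset.mem_univ, if_true]
    norm_num

theorem sum_pairDist_mul (i j : Y) (f : Y → ℝ) :
    ∑ y, pairDist i j y * f y = (f i + f j) / 2 := by
  simp only [pairDist, add_mul, ite_mul, zero_mul, Finset.sum_add_distrib, Finset.sum_ite_eq',
    Finset.mem_univ, if_true]
  ring

theorem le_SM (L : Y → Y → ℝ) (v : Y → ℝ) (y y' : Y) : L y y' + v y' - v y ≤ SM L v y :=
  le_ciSup (f := fun y' => L y y' + v y' - v y) (Set.finite_range _).bddAbove y'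

theorem SM_eq_of_isMax {L : Y → Y → ℝ} {v : Y → ℝ} {y y' : Y}
    (h : ∀ u, L y u + v u ≤ L y y' + v y') : SM L v y = L y y' + v y' - v y :=
  le_antisymm (ciSup_le fun u => by linarith [h u]) (le_SM L v y y')

/-- If `i` and `j` are margin maximizers of each other under `v`, then `v` minimizes the
conditional Max-Margin risk at the uniform distribution on `i`, `j`. -/
theorem mem_vstarM_pairDist {L : Y → Y → ℝ} {v : Y → ℝ} {i j : Y}
    (hij : ∀ u, L i u + v u ≤ L i j + v j) (hji : ∀ u, L j u + v u ≤ L j i + v i) :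
    v ∈ vstarM L (pairDist i j) := by
  have hlb : ∀ w : Y → ℝ, (L i j + L j i) / 2 ≤ ∑ y, pairDist i j y * SM L w y := fun w => by
    rw [sum_pairDist_mul]
    linarith [le_SM L w i j, le_SM L w j i]
  have hv : ∑ y, pairDist i j y * SM L v y = (L i j + L j i) / 2 := by
    rw [sum_pairDist_mul, SM_eq_of_isMax hij, SM_eq_of_isMax hji]
    ring
  change ∑ y, pairDist i j y * SM L v y = HM L (pairDist i j)
  refine le_antisymm ?_ (ciInf_le ⟨_, Set.forall_mem_range.2 hlb⟩ v)
  rw [hv]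
  exact le_ciInf hlb

theorem add_le_add_of_mem_ystar_pairDist {L : Y → Y → ℝ} {i j z : Y}
    (hz : z ∈ ystar L (pairDist i j)) (y : Y) : L z i + L z j ≤ L y i + L y j := by
  have hle : ∑ y', L z y' * pairDist i j y' ≤ ∑ y', L y y' * pairDist i j y' :=
    (show _ = HL L (pairDist i j) from hz).trans_le
      (ciInf_le (f := fun y => ∑ y', L y y' * pairDist i j y') (Set.finite_range _).bddBelow y)
  simp only [mul_comm (L _ _), sum_pairDist_mul] at hle
  linarith

theorem stmt0 (Y : Type*) [Fintype Y] [DecidableEq Y] [Nonempty Y] (L : Y → Y → ℝ)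
    (hcard : 2 < Fintype.card Y)
    (hnonneg : ∀ y y', 0 ≤ L y y')
    (hzero : ∀ y y', L y y' = 0 ↔ y = y')
    (hsymm : ∀ y y', L y y' = L y' y)
    (hcons : ∃ d : (Y → ℝ) → Y, ∀ q ∈ simplexSet Y, ∀ v ∈ vstarM L q, d v ∈ ystar L q) :
    (∀ y y' y'' : Y, L y y'' ≤ L y y' + L y' y'') ∧
    ∀ y1 y2 y3 : Y, ∃ z : Y,
      L y1 y2 = L y1 z + L z y2 ∧
      L y1 y3 = L y1 z + L z y3 ∧
      L y2 y3 = L y2 z + L z y3 := by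
  obtain ⟨d, hd⟩ := hcons
  have key : ∀ (v : Y → ℝ) (i j : Y), (∀ u, L i u + v u ≤ L i j + v j) →
      (∀ u, L j u + v u ≤ L j i + v i) → ∀ y, L (d v) i + L (d v) j ≤ L y i + L y j :=
    fun v i j hij hji => add_le_add_of_mem_ystar_pairDist
      (hd _ (pairDist_mem_simplexSet i j) v (mem_vstarM_pairDist hij hji))
  have hself : ∀ y, L y y = 0 := fun y => (hzero y y).2 rfl
  obtain ⟨C, hC⟩ : ∃ C, ∀ a b, L a b ≤ C := by
    obtain ⟨C, hC⟩ := (Set.finite_range fun p : Y × Y => L p.1 p.2).bddAbove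
    exact ⟨C, fun a b => hC ⟨(a, b), rfl⟩⟩
  have htri : ∀ a z b : Y, L a b ≤ L a z + L z b := by
    intro a z b
    rcases eq_or_ne a b with rfl | hab
    · linarith [hself a, hnonneg a z, hnonneg z a]
    -- With these scores both `pairDist a b` and the point mass at `b` are optimal.
    let v : Y → ℝ := fun y => if y = b then 0 else if y = a then -L a b else -C
    have hvb : v b = 0 := by simp [v]
    have hva : v a = -L a b := by simp [v, hab]
    have hv : ∀ u, u = a ∨ u = b ∨ v u = -C := fun u => by
      by_cases h1 : u = a <;> by_cases h2 : u = b <;> simp [v, h1, h2]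
    have hb : ∀ u, L b u + v u ≤ 0 := fun u => by
      rcases hv u with rfl | rfl | h
      · linarith [hsymm u b]
      · linarith [hself u]
      · linarith [hC b u]
    have ha : ∀ u, L a u + v u ≤ L a b + v b := fun u => by
      rcases hv u with rfl | rfl | h
      · linarith [hself u, hnonneg u b]
      · exact le_rfl
      · linarith [hC a u, hnonneg a b]
    have hdb : d v = b := by
      have := key v b b (fun u => by linarith [hb u, hself b])
        (fun u => by linarith [hb u, hself b]) b
      exact (hzero _ _).1 (le_antisymm (by linarith [hself b]) (hnonneg _ _))
    have := key v a b ha (fun u => by linarith [hb u, hsymm a b]) z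
    rw [hdb] at this
    linarith [hself b, hsymm a b, hsymm a z]
  refine ⟨htri, fun a b c => ?_⟩
  rcases eq_or_ne a b with rfl | hab
  · exact ⟨a, by simp [hself]⟩
  rcases eq_or_ne a c with rfl | hac
  · exact ⟨a, by simp [hself, hsymm]⟩
  rcases eq_or_ne b c with rfl | hbc
  · exact ⟨b, by simp [hself]⟩
  -- With these scores each of `a`, `b`, `c` is a margin maximizer of the other two.
  let v : Y → ℝ := fun y =>
    if y = a then -((L a b + L a c - L b c) / 2)
    else if y = b then -((L a b + L b c - L a c) / 2)
    else if y = c then -((L a c + L b c - L a b) / 2) else -C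
  have hva : v a = -((L a b + L a c - L b c) / 2) := by simp [v]
  have hvb : v b = -((L a b + L b c - L a c) / 2) := by simp [v, hab.symm]
  have hvc : v c = -((L a c + L b c - L a b) / 2) := by simp [v, hac.symm, hbc.symm]
  have hv : ∀ u, u = a ∨ u = b ∨ u = c ∨ v u = -C := fun u => by
    by_cases h1 : u = a <;> by_cases h2 : u = b <;> by_cases h3 : u = c <;> simp [v, h1, h2, h3]
  have sab := hsymm a b
  have sac := hsymm a c
  have sbc := hsymm b c
  have tabc := htri a b c
  have tacb := htri a c b
  have tbac := htri b a c
  have ha : ∀ u, L a u + v u ≤ (L a b + L a c - L b c) / 2 := fun u => by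
    rcases hv u with rfl | rfl | rfl | h
    · linarith [hself u]
    · linarith
    · linarith
    · linarith [hC a u]
  have hb : ∀ u, L b u + v u ≤ (L a b + L b c - L a c) / 2 := fun u => by
    rcases hv u with rfl | rfl | rfl | h
    · linarith
    · linarith [hself u]
    · linarith
    · linarith [hC b u]
  have hc : ∀ u, L c u + v u ≤ (L a c + L b c - L a b) / 2 := fun u => by
    rcases hv u with rfl | rfl | rfl | h
    · linarith
    · linarith
    · linarith [hself u]
    · linarith [hC c u]
  have kab := key v a b (fun u => by linarith [ha u]) (fun u => by linarith [hb u]) a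
  have kac := key v a c (fun u => by linarith [ha u]) (fun u => by linarith [hc u]) a
  have kbc := key v b c (fun u => by linarith [hb u]) (fun u => by linarith [hc u]) b
  refine ⟨d v, ?_, ?_, ?_⟩
  · linarith [htri a (d v) b, hsymm a (d v), hself a]
  · linarith [htri a (d v) c, hsymm a (d v), hself a]
  · linarith [htri b (d v) c, hsymm b (d v), hself b]
end

section
/- If L is a distance (symmetric and satisfying the triangle inequality), then H_M(q) ≤ 2 · H_L(q) for all q ∈ Δ. -/
open Finset Set

variable {Y : Type*} [Fintype Y] [DecidableEq Y] [Nonempty Y]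

/-- The Max-Margin loss is nonnegative, since the true label competes in the maximum. -/
theorem SM_nonneg {Y : Type*} [Fintype Y] (L : Y → Y → ℝ) (v : Y → ℝ) (y : Y)
    (hL : 0 ≤ L y y) : 0 ≤ SM L v y :=
  le_ciSup_of_le (Set.finite_range fun y' : Y => L y y' + v y' - v y).bddAbove y (by linarith)

/-- For a distance `L`, the score vector `-L z` has Max-Margin loss at most twice the loss of
predicting `z`. -/
theorem SM_neg_loss_le {Y : Type*} [Fintype Y] [Nonempty Y] (L : Y → Y → ℝ)
    (hsymm : ∀ y y', L y y' = L y' y)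
    (htri : ∀ y y' y'' : Y, L y y'' ≤ L y y' + L y' y'') (z y : Y) :
    SM L (fun y' => -L z y') y ≤ 2 * L z y :=
  ciSup_le fun y' => by linarith [htri y z y', hsymm y z]

theorem stmt3 (Y : Type*) [Fintype Y] [DecidableEq Y] [Nonempty Y] (L : Y → Y → ℝ)
    (hcard : 2 ≤ Fintype.card Y)
    (hnonneg : ∀ y y', 0 ≤ L y y')
    (hzero : ∀ y y', L y y' = 0 ↔ y = y')
    (hsymm : ∀ y y', L y y' = L y' y)
    (htri : ∀ y y' y'' : Y, L y y'' ≤ L y y' + L y' y'') :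
    ∀ q ∈ simplexSet Y, HM L q ≤ 2 * HL L q := by
  intro q hq
  have hbdd : BddBelow (Set.range fun v : Y → ℝ => ∑ y, q y * SM L v y) := by
    refine ⟨0, ?_⟩
    rintro _ ⟨v, rfl⟩
    exact Finset.sum_nonneg fun y _ =>
      mul_nonneg (hq.1 y) (SM_nonneg L v y (hnonneg y y))
  obtain ⟨z, hz⟩ := exists_eq_ciInf_of_finite (f := fun y : Y => ∑ y', L y y' * q y')
  calc HM L q ≤ ∑ y, q y * SM L (fun y' => -L z y') y := ciInf_le hbdd _
    _ ≤ ∑ y, q y * (2 * L z y) :=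
        Finset.sum_le_sum fun y _ =>
          mul_le_mul_of_nonneg_left (SM_neg_loss_le L hsymm htri z y) (hq.1 y)
    _ = 2 * ∑ y, L z y * q y := by
        rw [Finset.mul_sum]
        exact Finset.sum_congr rfl fun y _ => by ring
    _ = 2 * HL L q := by rw [HL, ← hz]
end

section
/- Suppose that for every q ∈ Δ and every y ∈ Y, if q ∈ Δ(y) then q y > 0. Then the Restricted-Max-Margin loss embeds L with embedding ψ(y) = −L_y; more precisely: (a) H_RM(q) = H_L(q) for all q ∈ Δ; (b) for all q ∈ Δ and y ∈ Y, y ∈ y⋆(q) if and only if the vector (−L y y')_{y'∈Y} belongs to v⋆_RM(q); and (c) S_RM((−L y y')_{y'∈Y}, z) = L y z for all y, z ∈ Y. -/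
open Finset Set

variable {Y : Type*} [Fintype Y] [DecidableEq Y] [Nonempty Y]

theorem mem_predSet_iff {L : Y → Y → ℝ} {y : Y} {q : Y → ℝ} :
    q ∈ predSet L y ↔
      q ∈ simplexSet Y ∧ ∀ z, ∑ y', L y y' * q y' ≤ ∑ y', L z y' * q y' := by
  refine and_congr_right fun _ => ?_
  constructor
  · intro h z
    exact h.le.trans (ciInf_le (Set.finite_range _).bddBelow z)
  · intro h
    exact le_antisymm (le_ciInf h) (ciInf_le (Set.finite_range _).bddBelow y)

theorem exists_mem_predSet (L : Y → Y → ℝ) {q : Y → ℝ} (hq : q ∈ simplexSet Y) :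
    ∃ y, q ∈ predSet L y := by
  obtain ⟨y, hy⟩ := Finite.exists_min fun y => ∑ y', L y y' * q y'
  exact ⟨y, mem_predSet_iff.2 ⟨hq, hy⟩⟩

theorem predSet_eq_inter (L : Y → Y → ℝ) (y : Y) :
    predSet L y =
      stdSimplex ℝ Y ∩ ⋂ z, {q | ∑ y', L y y' * q y' ≤ ∑ y', L z y' * q y'} := by
  ext q
  simp only [mem_predSet_iff, Set.mem_inter_iff, Set.mem_iInter, Set.mem_ofPred_eq]
  rfl

theorem isCompact_predSet (L : Y → Y → ℝ) (y : Y) : IsCompact (predSet L y) := by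
  rw [predSet_eq_inter]
  refine (isCompact_stdSimplex ℝ Y).inter_right (isClosed_iInter fun z => ?_)
  exact isClosed_le (by fun_prop) (by fun_prop)

theorem isLinearMap_sum_mul (a : Y → ℝ) : IsLinearMap ℝ fun q : Y → ℝ => ∑ y, a y * q y where
  map_add p q := by simp [mul_add, Finset.sum_add_distrib]
  map_smul c q := by simp [Finset.mul_sum, mul_left_comm]

theorem convex_predSet (L : Y → Y → ℝ) (y : Y) : Convex ℝ (predSet L y) := by
  rw [predSet_eq_inter]
  refine (convex_stdSimplex ℝ Y).inter (convex_iInter fun z => ?_)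
  have h := convex_halfSpace_le (isLinearMap_sum_mul fun y' => L y y' - L z y') 0
  simpa only [sub_mul, Finset.sum_sub_distrib, sub_nonpos] using h

theorem le_SRM {L : Y → Y → ℝ} {y : Y} {q : Y → ℝ} (hq : q ∈ predSet L y) (v : Y → ℝ) :
    ∑ y', L y y' * q y' + ∑ z, v z * q z - v y ≤ SRM L v y := by
  have hbdd : BddAbove ((fun q => ∑ y', L y y' * q y' + ∑ z, v z * q z) '' predSet L y) :=
    ((isCompact_predSet L y).image (by fun_prop)).bddAbove
  exact sub_le_sub_right (le_csSup hbdd (Set.mem_image_of_mem _ hq)) _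

/-- A vector of nonnegative reals stays nonnegative under small perturbations in a direction
vanishing wherever the vector does. -/
theorem exists_pos_mul_abs_le {ι : Type*} [Finite ι] (a b : ι → ℝ) (ha : ∀ i, 0 ≤ a i)
    (hab : ∀ i, a i = 0 → b i = 0) : ∃ ε > 0, ∀ i, ε * |b i| ≤ a i := by
  have h : ∀ᶠ ε : ℝ in nhdsWithin 0 (Set.Ioi 0), ∀ i, ε * |b i| ≤ a i := by
    refine Filter.eventually_all.2 fun i => ?_
    rcases (ha i).eq_or_lt with h0 | h0
    · simp [hab i h0.symm, ← h0]
    · have hc : Filter.Tendsto (fun ε : ℝ => ε * |b i|) (nhds 0) (nhds 0) := by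
        simpa using (continuous_mul_const |b i|).tendsto 0
      exact nhdsWithin_le_nhds (hc.eventually (ge_mem_nhds h0))
  exact (h.and self_mem_nhdsWithin).exists.imp fun ε hε => ⟨hε.2, hε.1⟩

/-- Every label in the support of a vertex of a prediction set is optimal at that vertex. -/
theorem mem_predSet_of_mem_extremePoints {L : Y → Y → ℝ}
    (hpos : ∀ q ∈ simplexSet Y, ∀ y : Y, q ∈ predSet L y → 0 < q y) {y z : Y} {e : Y → ℝ}
    (he : e ∈ (predSet L y).extremePoints ℝ) (hz : e z ≠ 0) : e ∈ predSet L z := by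
  by_contra hze
  obtain ⟨hsimp, hmin⟩ := mem_predSet_iff.1 he.1
  have hzy : z ≠ y := fun h => hze (h ▸ he.1)
  let M : Matrix Y Y ℝ := fun w => if w = z then 0 else if w = y then 1 else
    if e w = 0 then Pi.single w 1 else L w - L y
  have hdet : M.det = 0 := Matrix.det_eq_zero_of_row_eq_zero z fun j => by simp [M]
  obtain ⟨d, hd0, hd⟩ := Matrix.exists_mulVec_eq_zero_iff.2 hdet
  have hsum : ∑ w, d w = 0 := by
    simpa [M, Matrix.mulVec, dotProduct, hzy.symm] using congrFun hd y
  have hoff : ∀ w, e w = 0 → d w = 0 := by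
    intro w hw
    have hwz : w ≠ z := fun h => hz (h ▸ hw)
    have hwy : w ≠ y := fun h => (hpos e hsimp y he.1).ne' (h ▸ hw)
    simpa [M, Matrix.mulVec, hwz, hwy, hw] using congrFun hd w
  have htight : ∀ w, ∑ y', L w y' * e y' - ∑ y', L y y' * e y' = 0 →
      ∑ y', L w y' * d y' - ∑ y', L y y' * d y' = 0 := by
    intro w hw
    have hwe : e ∈ predSet L w :=
      mem_predSet_iff.2 ⟨hsimp, fun x => (sub_eq_zero.1 hw).trans_le (hmin x)⟩
    rcases eq_or_ne w y with rfl | hwy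
    · exact sub_self _
    have hwz : w ≠ z := fun h => hze (h ▸ hwe)
    simpa [M, Matrix.mulVec, dotProduct, hwz, hwy, (hpos e hsimp w hwe).ne', sub_mul]
      using congrFun hd w
  obtain ⟨ε, hε, hbound⟩ := exists_pos_mul_abs_le
    (Sum.elim e fun w => ∑ y', L w y' * e y' - ∑ y', L y y' * e y')
    (Sum.elim d fun w => ∑ y', L w y' * d y' - ∑ y', L y y' * d y')
    (Sum.forall.2 ⟨hsimp.1, fun w => sub_nonneg.2 (hmin w)⟩) (Sum.forall.2 ⟨hoff, htight⟩)
  have hmem : ∀ c : ℝ, |c| = ε → e + c • d ∈ predSet L y := by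
    intro c hc
    have hnonneg : ∀ a b : ℝ, ε * |b| ≤ a → 0 ≤ a + c * b := by
      intro a b hab
      rw [← hc, ← abs_mul] at hab
      linarith [neg_abs_le (c * b)]
    refine mem_predSet_iff.2 ⟨⟨fun w => hnonneg _ _ (hbound (Sum.inl w)), ?_⟩, fun w => ?_⟩
    · simp [Finset.sum_add_distrib, ← Finset.mul_sum, hsum, hsimp.2]
    · have h := hnonneg _ _ (hbound (Sum.inr w))
      simp only [Sum.elim_inr] at h
      rw [(isLinearMap_sum_mul (L y)).map_add, (isLinearMap_sum_mul (L w)).map_add,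
        (isLinearMap_sum_mul (L y)).map_smul, (isLinearMap_sum_mul (L w)).map_smul]
      simp only [smul_eq_mul]
      linarith
  have hmid : e ∈ openSegment ℝ (e + ε • d) (e + (-ε) • d) :=
    ⟨1 / 2, 1 / 2, by norm_num, by norm_num, by norm_num, by module⟩
  have heq := he.2 (hmem ε (abs_of_pos hε)) (hmem (-ε) (by rw [abs_neg, abs_of_pos hε])) hmid
  exact (smul_ne_zero hε.ne' hd0) (by simpa using heq)

theorem le_sum_mul_SRM {L : Y → Y → ℝ}
    (hpos : ∀ q ∈ simplexSet Y, ∀ y : Y, q ∈ predSet L y → 0 < q y) {y : Y} {q : Y → ℝ}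
    (hq : q ∈ predSet L y) (v : Y → ℝ) :
    ∑ y', L y y' * q y' ≤ ∑ z, q z * SRM L v z := by
  let s : Set (Y → ℝ) := {p | 0 ≤ ∑ z, (SRM L v z - L y z) * p z}
  have hs : closure (convexHull ℝ ((predSet L y).extremePoints ℝ)) ⊆ s := by
    refine closure_minimal (convexHull_min (fun e he => ?_) ?_) ?_
    · have hsimp := he.1.1
      have hle : ∑ z, e z * (∑ y', L y y' * e y' + ∑ w, v w * e w - v z) ≤
          ∑ z, e z * SRM L v z := by
        refine Finset.sum_le_sum fun z _ => ?_
        rcases eq_or_ne (e z) 0 with hz | hz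
        · simp [hz]
        have hze := mem_predSet_of_mem_extremePoints hpos he hz
        have hrisk : ∑ y', L y y' * e y' = ∑ y', L z y' * e y' := he.1.2.trans hze.2.symm
        rw [hrisk]
        exact mul_le_mul_of_nonneg_left (le_SRM hze v) (hsimp.1 z)
      simp only [mul_sub, Finset.sum_sub_distrib, ← Finset.sum_mul, hsimp.2, one_mul] at hle
      simp only [s, Set.mem_ofPred_eq, sub_mul, Finset.sum_sub_distrib]
      simp only [mul_comm (e _)] at hle
      linarith
    · exact convex_halfSpace_ge (isLinearMap_sum_mul _) 0
    · exact isClosed_le continuous_const (by fun_prop)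
  rw [closure_convexHull_extremePoints (isCompact_predSet L y) (convex_predSet L y)] at hs
  have h := hs hq
  simp only [s, Set.mem_ofPred_eq, sub_mul, Finset.sum_sub_distrib] at h
  simpa only [mul_comm (q _), sub_nonneg] using h

theorem exists_mem_predSet_inter {L : Y → Y → ℝ} (hnonneg : ∀ y y', 0 ≤ L y y')
    (hzero : ∀ y y', L y y' = 0 ↔ y = y')
    (hpos : ∀ q ∈ simplexSet Y, ∀ y : Y, q ∈ predSet L y → 0 < q y) (y z : Y) :
    ∃ q, q ∈ predSet L y ∧ q ∈ predSet L z := by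
  have hdiag : ∀ w, L w w = 0 := fun w => (hzero w w).2 rfl
  rcases eq_or_ne y z with rfl | hyz
  · refine ⟨Pi.single y 1, ?_⟩
    rw [and_self, mem_predSet_iff]
    refine ⟨single_mem_stdSimplex ℝ y, fun w => ?_⟩
    simpa [Pi.single_apply, hdiag] using hnonneg w y
  · have hL : ∀ {a b}, a ≠ b → 0 < L a b := fun {a b} hab =>
      lt_of_le_of_ne (hnonneg a b) fun h => hab ((hzero a b).1 h.symm)
    have hyz0 := hL hyz
    have hzy0 := hL hyz.symm
    let q : Y → ℝ := Pi.single y (L y z / (L y z + L z y)) + Pi.single z (L z y / (L y z + L z y))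
    have hq : q ∈ simplexSet Y := by
      refine ⟨fun w => ?_, ?_⟩
      · have h₁ : (0 : Y → ℝ) ≤ Pi.single y (L y z / (L y z + L z y)) :=
          Pi.single_nonneg.2 (by positivity)
        have h₂ : (0 : Y → ℝ) ≤ Pi.single z (L z y / (L y z + L z y)) :=
          Pi.single_nonneg.2 (by positivity)
        exact add_nonneg (h₁ w) (h₂ w)
      · simp only [q, Pi.add_apply, Finset.sum_add_distrib, Finset.sum_pi_single',
          Finset.mem_univ, if_true]
        field_simp
    have hrisk : ∑ y', L y y' * q y' = ∑ y', L z y' * q y' := by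
      simp only [q, Pi.add_apply, mul_add, Finset.sum_add_distrib, Pi.single_apply, mul_ite,
        mul_zero, Finset.sum_ite_eq', Finset.mem_univ, if_true, hdiag]
      ring
    obtain ⟨w, hw⟩ := exists_mem_predSet L hq
    have hwq := hpos q hq w hw
    have hw' : w = y ∨ w = z := by
      by_contra! h
      simp [q, h.1, h.2] at hwq
    rcases hw' with rfl | rfl
    · exact ⟨q, hw, hq, hrisk.symm.trans hw.2⟩
    · exact ⟨q, ⟨hq, hrisk.trans hw.2⟩, hw⟩

theorem SRM_neg {L : Y → Y → ℝ} (hnonneg : ∀ y y', 0 ≤ L y y')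
    (hzero : ∀ y y', L y y' = 0 ↔ y = y')
    (hpos : ∀ q ∈ simplexSet Y, ∀ y : Y, q ∈ predSet L y → 0 < q y) (y z : Y) :
    SRM L (fun y' => -(L y y')) z = L y z := by
  obtain ⟨q, hqy, hqz⟩ := exists_mem_predSet_inter hnonneg hzero hpos y z
  refine le_antisymm ?_ ?_
  · have hle : sSup ((fun q => ∑ y', L z y' * q y' + ∑ w, -(L y w) * q w) '' predSet L z) ≤ 0 := by
      refine csSup_le ⟨_, Set.mem_image_of_mem _ hqz⟩ ?_
      rintro _ ⟨p, hp, rfl⟩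
      simp only [neg_mul, Finset.sum_neg_distrib]
      linarith [(mem_predSet_iff.1 hp).2 y]
    rw [SRM]
    linarith
  · have h := le_SRM hqz fun y' => -(L y y')
    simp only [neg_mul, Finset.sum_neg_distrib] at h
    linarith [(mem_predSet_iff.1 hqy).2 z]

theorem stmt6 (Y : Type*) [Fintype Y] [DecidableEq Y] [Nonempty Y] (L : Y → Y → ℝ)
    (hcard : 2 ≤ Fintype.card Y)
    (hnonneg : ∀ y y', 0 ≤ L y y')
    (hzero : ∀ y y', L y y' = 0 ↔ y = y')
    (hpos : ∀ q ∈ simplexSet Y, ∀ y : Y, q ∈ predSet L y → 0 < q y) :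
    (∀ q ∈ simplexSet Y, HRM L q = HL L q) ∧
    (∀ q ∈ simplexSet Y, ∀ y : Y,
      y ∈ ystar L q ↔ (fun y' => -(L y y')) ∈ vstarRM L q) ∧
    (∀ y z : Y, SRM L (fun y' => -(L y y')) z = L y z) := by
  have hS := SRM_neg hnonneg hzero hpos
  have hrisk : ∀ (q : Y → ℝ) (y : Y),
      ∑ z, q z * SRM L (fun y' => -(L y y')) z = ∑ z, L y z * q z := by
    intro q y
    simp only [hS, mul_comm]
  have hH : ∀ q ∈ simplexSet Y, HRM L q = HL L q := by
    intro q hq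
    obtain ⟨y, hy⟩ := exists_mem_predSet L hq
    have hbound : ∀ v, HL L q ≤ ∑ z, q z * SRM L v z := fun v =>
      hy.2.symm.le.trans (le_sum_mul_SRM hpos hy v)
    refine le_antisymm ?_ (le_ciInf hbound)
    have hle := ciInf_le ⟨HL L q, Set.forall_mem_range.2 hbound⟩ fun y' => -(L y y')
    exact hle.trans ((hrisk q y).trans hy.2).le
  refine ⟨hH, fun q hq y => ?_, hS⟩
  rw [vstarRM, Set.mem_ofPred_eq, hrisk, hH q hq]
  rfl
end

section
/- For every q ∈ Δ, the Bayes risk of the Max-Min-Margin loss equals the Bayes risk of the discrete loss: H_MM(q) = H_L(q), i.e., inf_{v : Y → ℝ} ∑_{y} q y · S_MM(v, y) = min_{y ∈ Y} ⟨L_y, q⟩. -/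
open Finset Set

variable {Y : Type*} [Fintype Y] [DecidableEq Y] [Nonempty Y]

/-- The set whose supremum defines the Max-Min-Margin loss is bounded above. -/
theorem bddAbove_maxMinMargin (L : Y → Y → ℝ) (v : Y → ℝ) :
    BddAbove ((fun q => (⨅ z : Y, ∑ y', L z y' * q y') + ∑ z, v z * q z) '' simplexSet Y) := by
  obtain ⟨y₀⟩ := ‹Nonempty Y›
  refine ⟨∑ y, |L y₀ y + v y|, ?_⟩
  rintro _ ⟨q, ⟨hq, hsum⟩, rfl⟩
  have hinf : ⨅ z : Y, ∑ y', L z y' * q y' ≤ ∑ y', L y₀ y' * q y' :=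
    ciInf_le (Set.finite_range _).bddBelow y₀
  calc (⨅ z : Y, ∑ y', L z y' * q y') + ∑ z, v z * q z
      ≤ ∑ y, L y₀ y * q y + ∑ z, v z * q z := by gcongr
    _ = ∑ y, (L y₀ y + v y) * q y := by simp only [add_mul, Finset.sum_add_distrib]
    _ ≤ ∑ y, |L y₀ y + v y| := by
        refine Finset.sum_le_sum fun y _ => ?_
        have hle : q y ≤ 1 :=
          hsum ▸ Finset.single_le_sum (fun z _ => hq z) (Finset.mem_univ y)
        calc (L y₀ y + v y) * q y ≤ |L y₀ y + v y| * q y :=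
              mul_le_mul_of_nonneg_right (le_abs_self _) (hq y)
          _ ≤ |L y₀ y + v y| := mul_le_of_le_one_right (abs_nonneg _) hle

/-- The conditional risk of the Max-Min-Margin loss on the simplex. -/
theorem sum_mul_SMM (L : Y → Y → ℝ) (v : Y → ℝ) {q : Y → ℝ} (hq : q ∈ simplexSet Y) :
    ∑ y, q y * SMM L v y =
      sSup ((fun p => (⨅ z : Y, ∑ y', L z y' * p y') + ∑ z, v z * p z) '' simplexSet Y) -
        ∑ y, v y * q y := by
  simp only [SMM, mul_sub, Finset.sum_sub_distrib, ← Finset.sum_mul, hq.2, one_mul]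
  simp only [mul_comm]

/-- The conditional risk of the Max-Min-Margin loss dominates the discrete Bayes risk. -/
theorem HL_le_sum_mul_SMM (L : Y → Y → ℝ) (v : Y → ℝ) {q : Y → ℝ} (hq : q ∈ simplexSet Y) :
    HL L q ≤ ∑ y, q y * SMM L v y := by
  rw [sum_mul_SMM L v hq, le_sub_iff_add_le]
  exact le_csSup (bddAbove_maxMinMargin L v) ⟨q, hq, rfl⟩

/-- The score `-L y₀` has conditional risk at most `∑ y, L y₀ y * q y`. -/
theorem sum_mul_SMM_neg_le (L : Y → Y → ℝ) (y₀ : Y) {q : Y → ℝ} (hq : q ∈ simplexSet Y) :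
    ∑ y, q y * SMM L (fun y => -L y₀ y) y ≤ ∑ y, L y₀ y * q y := by
  rw [sum_mul_SMM L _ hq]
  simp only [neg_mul, Finset.sum_neg_distrib, sub_neg_eq_add]
  refine add_le_of_nonpos_left (csSup_le (Set.Nonempty.image _ ⟨q, hq⟩) ?_)
  rintro _ ⟨p, -, rfl⟩
  have hinf : ⨅ z : Y, ∑ y', L z y' * p y' ≤ ∑ y', L y₀ y' * p y' :=
    ciInf_le (Set.finite_range _).bddBelow y₀
  simpa using hinf

theorem stmt8 (Y : Type*) [Fintype Y] [DecidableEq Y] [Nonempty Y] (L : Y → Y → ℝ)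
    (hcard : 2 ≤ Fintype.card Y)
    (hnonneg : ∀ y y', 0 ≤ L y y')
    (hzero : ∀ y y', L y y' = 0 ↔ y = y') :
    ∀ q ∈ simplexSet Y, HMM L q = HL L q := by
  intro q hq
  refine le_antisymm ?_ (le_ciInf fun v => HL_le_sum_mul_SMM L v hq)
  refine le_ciInf fun y => ?_
  refine (ciInf_le ⟨HL L q, ?_⟩ fun z => -L y z).trans (sum_mul_SMM_neg_le L y hq)
  rintro _ ⟨v, rfl⟩
  exact HL_le_sum_mul_SMM L v hq
end

section
/- For every v : Y → ℝ and every y ∈ Y, the three margin losses are ordered pointwise: S_RM(v, y) ≤ S_MM(v, y) ≤ S_M(v, y). -/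
open Finset Set

variable {Y : Type*} [Fintype Y] [DecidableEq Y] [Nonempty Y]

/-- An average over the simplex is at most any upper bound of the averaged function. -/
lemma sum_mul_le_of_mem_simplexSet {ι : Type*} [Fintype ι] {q : ι → ℝ} (hq : q ∈ simplexSet ι)
    {f : ι → ℝ} {c : ℝ} (hf : ∀ i, f i ≤ c) : ∑ i, f i * q i ≤ c :=
  calc ∑ i, f i * q i ≤ ∑ i, c * q i :=
        Finset.sum_le_sum fun i _ => mul_le_mul_of_nonneg_right (hf i) (hq.1 i)
    _ = c := by rw [← Finset.mul_sum, hq.2, mul_one]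

/-- The objective of the Max-Min-Margin loss is bounded on the simplex by the Max-Margin loss. -/
lemma iInf_add_le_SM {ι : Type*} [Fintype ι] (L : ι → ι → ℝ) (v : ι → ℝ) (y : ι) {q : ι → ℝ}
    (hq : q ∈ simplexSet ι) :
    (⨅ z : ι, ∑ y', L z y' * q y') + ∑ z, v z * q z ≤ SM L v y + v y :=
  calc (⨅ z : ι, ∑ y', L z y' * q y') + ∑ z, v z * q z
      ≤ ∑ y', L y y' * q y' + ∑ z, v z * q z :=
        add_le_add_left (ciInf_le (Set.finite_range _).bddBelow y) _
    _ = ∑ y', (L y y' + v y') * q y' := by simp only [add_mul, Finset.sum_add_distrib]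
    _ ≤ SM L v y + v y := by
        refine sum_mul_le_of_mem_simplexSet hq fun y' => ?_
        have h : L y y' + v y' - v y ≤ SM L v y :=
          le_ciSup (f := fun y' => L y y' + v y' - v y) (Set.finite_range _).bddAbove y'
        linarith

/-- The point mass at `y` belongs to the prediction set of `y`. -/
lemma single_mem_predSet {L : Y → Y → ℝ} {y : Y} (hy : ∀ z, L y y ≤ L z y) :
    Pi.single y 1 ∈ predSet L y := by
  refine ⟨⟨fun z => ?_, by simp⟩, ?_⟩
  · by_cases h : z = y <;> simp [h]
  · simpa [ystar, HL, Pi.single_apply] using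
      le_antisymm (le_ciInf hy) (ciInf_le (Set.finite_range fun z => L z y).bddBelow y)

theorem stmt11 (Y : Type*) [Fintype Y] [DecidableEq Y] [Nonempty Y] (L : Y → Y → ℝ)
    (hcard : 2 ≤ Fintype.card Y)
    (hnonneg : ∀ y y', 0 ≤ L y y')
    (hzero : ∀ y y', L y y' = 0 ↔ y = y') :
    ∀ (v : Y → ℝ) (y : Y), SRM L v y ≤ SMM L v y ∧ SMM L v y ≤ SM L v y := by
  intro v y
  have hbound : ∀ r ∈ (fun q => (⨅ z : Y, ∑ y', L z y' * q y') + ∑ z, v z * q z) '' simplexSet Y,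
      r ≤ SM L v y + v y := by
    rintro _ ⟨q, hq, rfl⟩
    exact iInf_add_le_SM L v y hq
  have hmem : Pi.single y 1 ∈ predSet L y :=
    single_mem_predSet fun z => ((hzero y y).2 rfl).trans_le (hnonneg z y)
  constructor
  · unfold SRM SMM
    apply sub_le_sub_right
    refine csSup_le_csSup ⟨_, hbound⟩ (.image _ ⟨_, hmem⟩) ?_
    rintro _ ⟨q, ⟨hq, hy⟩, rfl⟩
    exact ⟨q, hq, congrArg (· + ∑ z, v z * q z) hy.symm⟩
  · exact sub_le_iff_le_add.2 (csSup_le (.image _ ⟨_, hmem.1⟩) hbound)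
end

section
/- Let C_y ⊆ Δ be a nonempty compact convex set for each y ∈ Y, and define the surrogate loss S(v, y) = max_{p ∈ C_y} (⟨L_y, p⟩ + ⟨v, p⟩) − v y. Fix q ∈ Δ and assume there exists a family ν : Y → (Y → ℝ) with ν y ∈ C_y for all y and ∑_{y} q y · ν y = q (as vectors in Y → ℝ). Then inf_{v : Y → ℝ} ∑_{y} q y · S(v, y) = sup { ∑_{y} q y · ⟨L_y, ν y⟩ : ν : Y → (Y → ℝ), ν y ∈ C_y for all y, ∑_{y} q y · ν y = q }. -/
open Finset Set

variable {Y : Type*} [Fintype Y] [DecidableEq Y] [Nonempty Y]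

/-- The Lagrangian `∑ y, q y * (⟨L_y, ν y⟩ + ⟨v, ν y⟩ - v y)` splits into the objective and the
pairing of the multiplier `v` with the constraint residual `∑ y, q y • ν y - q`. -/
lemma sum_mul_lagrangian {Y : Type*} [Fintype Y] (L ν : Y → Y → ℝ) (q v : Y → ℝ) :
    ∑ y, q y * (∑ y', L y y' * ν y y' + ∑ z, v z * ν y z - v y) =
      ∑ y, q y * ∑ y', L y y' * ν y y' + ∑ z, v z * (∑ y, q y • ν y - q) z := by
  have h : ∑ z, v z * (∑ y, q y • ν y) z = ∑ y, q y * ∑ z, v z * ν y z := by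
    simp only [Finset.sum_apply, Pi.smul_apply, smul_eq_mul, Finset.mul_sum]
    rw [Finset.sum_comm]
    exact Finset.sum_congr rfl fun y _ => Finset.sum_congr rfl fun z _ => by ring
  simp only [Pi.sub_apply, mul_sub, mul_add, Finset.sum_sub_distrib, Finset.sum_add_distrib, h,
    mul_comm (v _) (q _)]
  ring

/-- A linear functional on `(ι → ℝ) × ℝ` in coordinates. -/
lemma prod_pi_functional_apply {ι : Type*} [Fintype ι] [DecidableEq ι]
    (f : (ι → ℝ) × ℝ →ₗ[ℝ] ℝ) (w : ι → ℝ) (t : ℝ) :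
    f (w, t) = ∑ z, f (Pi.single z 1, 0) * w z + f (0, 1) * t := by
  have hw : f (w, 0) = ∑ z, f (Pi.single z 1, 0) * w z := by
    have := LinearMap.pi_apply_eq_sum_univ (f ∘ₗ LinearMap.inl ℝ (ι → ℝ) ℝ) w
    simp only [LinearMap.comp_apply, LinearMap.inl_apply, smul_eq_mul] at this
    rw [this]
    refine Finset.sum_congr rfl fun z _ => ?_
    rw [mul_comm]
    congr 3
    ext j
    simp [Pi.single_apply, eq_comm]
  have ht : f (0, t) = f (0, 1) * t := by
    have := f.map_smul t (0, 1)
    simpa [mul_comm] using this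
  rw [← hw, ← ht, ← map_add]
  simp

/-- Lagrange multipliers for maximizing a linear functional `g` under a linear constraint `A x = b`
over a compact convex set: every strict upper bound of the constrained maximum is a strict upper
bound of the Lagrangian for some multiplier. -/
lemma exists_multiplier_lt {E ι : Type*} [AddCommGroup E] [Module ℝ E] [TopologicalSpace E]
    [Fintype ι] {K : Set E} (hK : IsCompact K) (hconv : Convex ℝ K)
    (A : E →L[ℝ] (ι → ℝ)) (g : E →L[ℝ] ℝ) (b : ι → ℝ) (hfeas : ∃ x ∈ K, A x = b) {c : ℝ}
    (hc : ∀ x ∈ K, A x = b → g x < c) :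
    ∃ v : ι → ℝ, ∀ x ∈ K, g x + ∑ z, v z * (A x - b) z < c := by
  classical
  have hnot : (b, c) ∉ A.prod g '' K := by
    rintro ⟨x, hx, hxe⟩
    obtain ⟨h1, h2⟩ := Prod.ext_iff.1 hxe
    exact (hc x hx h1).ne h2
  obtain ⟨f, u, hlt, hu⟩ := geometric_hahn_banach_closed_point
    (hconv.linear_image (A.prod g).toLinearMap)
    (hK.image (A.prod g).continuous).isClosed hnot
  have hf : ∀ w t, f (w, t) = ∑ z, f (Pi.single z 1, 0) * w z + f (0, 1) * t :=
    prod_pi_functional_apply f.toLinearMap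
  set a := f (0, 1)
  have hsep : ∀ x ∈ K, ∑ z, f (Pi.single z 1, 0) * (A x - b) z + a * (g x - c) < 0 := by
    intro x hx
    have h1 : f (A x, g x) < f (b, c) := (hlt _ ⟨x, hx, rfl⟩).trans hu
    rw [← hf, ← Prod.mk_sub_mk, map_sub]
    linarith
  have ha : 0 < a := by
    obtain ⟨x, hx, hxb⟩ := hfeas
    have h1 := hsep x hx
    have h2 := hc x hx hxb
    simp only [hxb, sub_self, Pi.zero_apply, mul_zero, Finset.sum_const_zero, zero_add] at h1
    nlinarith
  refine ⟨fun z => f (Pi.single z 1, 0) / a, fun x hx => ?_⟩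
  have h1 := hsep x hx
  have h2 : ∑ z, f (Pi.single z 1, 0) / a * (A x - b) z =
      (∑ z, f (Pi.single z 1, 0) * (A x - b) z) / a := by
    rw [Finset.sum_div]
    exact Finset.sum_congr rfl fun z _ => by ring
  have h3 : (∑ z, f (Pi.single z 1, 0) * (A x - b) z) / a < c - g x := by
    rw [div_lt_iff₀ ha]
    linarith
  rw [h2]
  linarith

theorem stmt12 (Y : Type*) [Fintype Y] [DecidableEq Y] [Nonempty Y] (L : Y → Y → ℝ)
    (hcard : 2 ≤ Fintype.card Y)
    (hnonneg : ∀ y y', 0 ≤ L y y')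
    (C : Y → Set (Y → ℝ))
    (hsub : ∀ y, C y ⊆ simplexSet Y)
    (hne : ∀ y, (C y).Nonempty)
    (hcomp : ∀ y, IsCompact (C y))
    (hconv : ∀ y, Convex ℝ (C y))
    (q : Y → ℝ) (hq : q ∈ simplexSet Y)
    (hex : ∃ ν : Y → Y → ℝ, (∀ y, ν y ∈ C y) ∧ ∑ y, q y • ν y = q) :
    (⨅ v : Y → ℝ, ∑ y, q y *
        (sSup ((fun p => ∑ y', L y y' * p y' + ∑ z, v z * p z) '' C y) - v y)) =
    sSup {r : ℝ | ∃ ν : Y → Y → ℝ, (∀ y, ν y ∈ C y) ∧ (∑ y, q y • ν y = q) ∧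
        r = ∑ y, q y * ∑ y', L y y' * ν y y'} := by
  let S : (Y → ℝ) → Y → ℝ := fun v y =>
    sSup ((fun p => ∑ y', L y y' * p y' + ∑ z, v z * p z) '' C y)
  set R : Set ℝ := {r : ℝ | ∃ ν : Y → Y → ℝ, (∀ y, ν y ∈ C y) ∧ (∑ y, q y • ν y = q) ∧
    r = ∑ y, q y * ∑ y', L y y' * ν y y'}
  have himage : ∀ (v : Y → ℝ) y, IsCompact
      ((fun p : Y → ℝ => ∑ y', L y y' * p y' + ∑ z, v z * p z) '' C y) :=
    fun v y => (hcomp y).image (by fun_prop)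
  have hweak : ∀ v, ∀ r ∈ R, r ≤ ∑ y, q y * (S v y - v y) := by
    rintro v r ⟨ν, hν, hνq, rfl⟩
    have h := sum_mul_lagrangian L ν q v
    simp only [hνq, sub_self, Pi.zero_apply, mul_zero, Finset.sum_const_zero, add_zero] at h
    rw [← h]
    refine Finset.sum_le_sum fun y _ => mul_le_mul_of_nonneg_left ?_ (hq.1 y)
    exact sub_le_sub_right (le_csSup (himage v y).bddAbove ⟨ν y, hν y, rfl⟩) _
  have hRne : R.Nonempty := by
    obtain ⟨ν, hν, hνq⟩ := hex
    exact ⟨_, ν, hν, hνq, rfl⟩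
  have hRbdd : BddAbove R := ⟨_, fun r hr => hweak 0 r hr⟩
  apply le_antisymm
  · refine le_of_forall_pos_le_add fun ε hε => ?_
    let A : (Y → Y → ℝ) →L[ℝ] (Y → ℝ) := ∑ y, q y • ContinuousLinearMap.proj y
    let g : (Y → Y → ℝ) →L[ℝ] ℝ := LinearMap.toContinuousLinearMap
      (∑ y, q y • ∑ y', L y y' • (LinearMap.proj y' ∘ₗ LinearMap.proj y))
    have hA : ∀ ν, A ν = ∑ y, q y • ν y := fun ν => by simp [A]
    have hg : ∀ ν, g ν = ∑ y, q y * ∑ y', L y y' * ν y y' := fun ν => by simp [g]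
    obtain ⟨v, hv⟩ := exists_multiplier_lt (K := Set.univ.pi C) (c := sSup R + ε)
      (isCompact_univ_pi hcomp) (convex_pi fun y _ => hconv y) A g q
      (by
        obtain ⟨ν, hν, hνq⟩ := hex
        exact ⟨ν, fun y _ => hν y, by rw [hA, hνq]⟩)
      (fun ν hν hνq => by
        have : g ν ≤ sSup R :=
          le_csSup hRbdd ⟨ν, fun y => hν y trivial, by rw [← hA, hνq], hg ν⟩
        linarith)
    have hatt : ∀ y, ∃ p ∈ C y, ∑ y', L y y' * p y' + ∑ z, v z * p z = S v y :=
      fun y => (himage v y).sSup_mem ((hne y).image _)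
    choose ν hν hνS using hatt
    have hbdd : BddBelow (Set.range fun v => ∑ y, q y * (S v y - v y)) := by
      obtain ⟨r, hr⟩ := hRne
      exact ⟨r, by rintro _ ⟨v, rfl⟩; exact hweak v r hr⟩
    refine (ciInf_le hbdd v).trans ?_
    have h := hv ν fun y _ => hν y
    rw [hA, hg, ← sum_mul_lagrangian] at h
    simp only [hνS] at h
    exact h.le
  · exact le_ciInf fun v => csSup_le hRne fun r hr => hweak v r hr
end

section
/- Suppose that for every q ∈ Δ and every y ∈ Y, if q ∈ Δ(y) then q y > 0. Then for every y ∈ Y and every extreme point q of the prediction set Δ(y), the rank-one matrix q q^T (the matrix (y', y'') ↦ q y' · q y'') belongs to C_L. -/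
open Finset Set

variable {Y : Type*} [Fintype Y] [DecidableEq Y] [Nonempty Y]

theorem mem_ystar_iff (L : Y → Y → ℝ) (q : Y → ℝ) (y : Y) :
    y ∈ ystar L q ↔ ∀ z, ∑ c, L y c * q c ≤ ∑ c, L z c * q c := by
  constructor
  · intro h z
    have h' : ∑ c, L y c * q c = HL L q := h
    rw [h']
    exact ciInf_le (Set.finite_range fun z => ∑ c, L z c * q c).bddBelow z
  · intro h
    exact le_antisymm (le_ciInf h)
      (ciInf_le (Set.finite_range fun z => ∑ c, L z c * q c).bddBelow y)

theorem eventually_nonneg_add_mul {α β : ℝ} (hα : 0 ≤ α) (h : α = 0 → β = 0) :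
    ∀ᶠ t in nhds (0 : ℝ), 0 ≤ α + t * β := by
  rcases hα.eq_or_lt with h0 | h0
  · simp [← h0, h h0.symm]
  · have hc : Filter.Tendsto (fun t : ℝ => α + t * β) (nhds 0) (nhds α) := by
      have : Continuous fun t : ℝ => α + t * β := by fun_prop
      simpa using this.tendsto 0
    exact (hc.eventually (lt_mem_nhds h0)).mono fun _ ht => ht.le

/-- A direction along which every constraint active at `q` stays active can be followed a little
way in `predSet L y`. -/
theorem eventually_add_smul_mem_predSet {L : Y → Y → ℝ} {y : Y} {q v : Y → ℝ}
    (hq : q ∈ predSet L y) (hsum : ∑ c, v c = 0) (hsupp : ∀ c, q c = 0 → v c = 0)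
    (hopt : ∀ z ∈ ystar L q, ∑ c, (L z c - L y c) * v c = 0) :
    ∀ᶠ t in nhds (0 : ℝ), q + t • v ∈ predSet L y := by
  have hy := (mem_ystar_iff L q y).1 hq.2
  have hcoord : ∀ᶠ t in nhds (0 : ℝ), ∀ c, 0 ≤ q c + t * v c :=
    Filter.eventually_all.2 fun c => eventually_nonneg_add_mul (hq.1.1 c) (hsupp c)
  have hrisk : ∀ᶠ t in nhds (0 : ℝ), ∀ z,
      0 ≤ (∑ c, L z c * q c - ∑ c, L y c * q c) + t * ∑ c, (L z c - L y c) * v c :=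
    Filter.eventually_all.2 fun z =>
      eventually_nonneg_add_mul (sub_nonneg.2 (hy z)) fun h => hopt z <|
        (mem_ystar_iff L q z).2 fun w => (sub_eq_zero.1 h).le.trans (hy w)
  filter_upwards [hcoord, hrisk] with t ht₁ ht₂
  refine ⟨⟨ht₁, ?_⟩, (mem_ystar_iff L _ y).2 fun z => ?_⟩
  · simp [Finset.sum_add_distrib, ← Finset.mul_sum, hsum, hq.1.2]
  · have hz := ht₂ z
    have expand : ∀ w, ∑ c, L w c * (q + t • v) c
        = ∑ c, L w c * q c + t * ∑ c, L w c * v c := fun w => by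
      rw [Finset.mul_sum, ← Finset.sum_add_distrib]
      exact Finset.sum_congr rfl fun c _ => by simp; ring
    simp only [sub_mul, Finset.sum_sub_distrib] at hz
    rw [expand, expand]
    linarith

/-- If every optimal label at `q` lies in the support of `q`, but some label `a` of the support is
not optimal, then the constraints active at `q` leave a free direction. -/
theorem exists_ne_zero_of_not_mem_ystar {L : Y → Y → ℝ} {y a : Y} {q : Y → ℝ}
    (hy : y ∈ ystar L q) (hpos : ∀ z ∈ ystar L q, q z ≠ 0) (ha : q a ≠ 0)
    (hay : a ∉ ystar L q) :
    ∃ v : Y → ℝ, v ≠ 0 ∧ ∑ c, v c = 0 ∧ (∀ c, q c = 0 → v c = 0) ∧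
      ∀ z ∈ ystar L q, ∑ c, (L z c - L y c) * v c = 0 := by
  classical
  let M : Matrix Y Y ℝ := fun b =>
    if b = y then fun _ => 1
    else if b ∈ ystar L q then fun c => L b c - L y c
    else if q b = 0 then Pi.single b 1
    else 0
  have hdet : M.det = 0 := by
    refine Matrix.det_eq_zero_of_row_eq_zero a fun c => ?_
    have : a ≠ y := fun h => hay (h ▸ hy)
    simp [M, this, hay, ha]
  obtain ⟨v, hv, hMv⟩ := Matrix.exists_mulVec_eq_zero_iff.2 hdet
  have hrow : ∀ b, ∑ c, M b c * v c = 0 := fun b => congrFun hMv b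
  refine ⟨v, hv, ?_, fun c hc => ?_, fun z hz => ?_⟩
  · simpa [M] using hrow y
  · have hcs : c ∉ ystar L q := fun h => hpos c h hc
    have hcy : c ≠ y := fun h => hcs (h ▸ hy)
    simpa [M, hcs, hcy, hc, Pi.single_apply] using hrow c
  · by_cases hzy : z = y
    · simp [hzy]
    · simpa [M, hzy, hz] using hrow z

theorem mem_ystar_of_mem_extremePoints {L : Y → Y → ℝ} {y a : Y} {q : Y → ℝ}
    (hq : q ∈ Set.extremePoints ℝ (predSet L y)) (hpos : ∀ z ∈ ystar L q, q z ≠ 0)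
    (ha : q a ≠ 0) : a ∈ ystar L q := by
  by_contra hay
  have hqp : q ∈ predSet L y := hq.1
  obtain ⟨v, hv, hsum, hsupp, hopt⟩ := exists_ne_zero_of_not_mem_ystar hqp.2 hpos ha hay
  obtain ⟨ε, hε, h⟩ := Metric.eventually_nhds_iff.1
    (eventually_add_smul_mem_predSet hqp hsum hsupp hopt)
  have hlt : |ε| / 2 < ε := by rw [abs_of_pos hε]; exact half_lt_self hε
  have h₁ := @h (ε / 2) (by simpa [Real.dist_eq] using hlt)
  have h₂ := @h (-(ε / 2)) (by simpa [Real.dist_eq] using hlt)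
  have hseg : q ∈ openSegment ℝ (q + (ε / 2) • v) (q + (-(ε / 2)) • v) := by
    refine ⟨1 / 2, 1 / 2, by norm_num, by norm_num, by norm_num, ?_⟩
    module
  have heq := hq.2 h₁ h₂ hseg
  have : (ε / 2) • v = 0 := by simpa using heq
  exact (smul_ne_zero (half_pos hε).ne' hv) this

theorem stmt19 (Y : Type*) [Fintype Y] [DecidableEq Y] [Nonempty Y] (L : Y → Y → ℝ)
    (hcard : 2 ≤ Fintype.card Y)
    (hnonneg : ∀ y y', 0 ≤ L y y')
    (hzero : ∀ y y', L y y' = 0 ↔ y = y')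
    (hpos : ∀ q ∈ simplexSet Y, ∀ y : Y, q ∈ predSet L y → 0 < q y) :
    ∀ y : Y, ∀ q ∈ Set.extremePoints ℝ (predSet L y),
      (fun a b => q a * q b) ∈ CL L := by
  intro y q hq a z
  have hqs : q ∈ simplexSet Y := hq.1.1
  have hfactor : ∀ w, ∑ c, L w c * (q a * q c) = q a * ∑ c, L w c * q c := fun w => by
    rw [Finset.mul_sum]
    exact Finset.sum_congr rfl fun c _ => by ring
  simp only [hfactor]
  by_cases ha : q a = 0
  · simp [ha]
  · have hopt := mem_ystar_of_mem_extremePoints hq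
      (fun w hw => (hpos q hqs w ⟨hqs, hw⟩).ne') ha
    exact mul_le_mul_of_nonneg_left ((mem_ystar_iff L q a).1 hopt z) (hqs.1 a)
end
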